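/- The space L_3 of Lie elements of ℂ[S_3] with respect to the permutation representation ℂ³ has dimension 4, and the four elements 1 − (12), 1 − (23), 1 − (13), and (123) − (132) form a basis of L_3. -/

import Mathlib

/-- The wedge product `v₁ ∧ ⋯ ∧ vₘ` of a family of vectors, as an element of the `m`-th
exterior power `⋀[k]^m V`. -/
noncomputable def wedge (k : Type*) [Field k] (V : Type*) [AddCommGroup V] [Module k V]
    (m : ℕ) (v : Fin m → V) : ⋀[k]^m V :=
  ⟨ExteriorAlgebra.ιMulti k m v, ExteriorAlgebra.ιMulti_range k m (Set.mem_range_self v)⟩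

/-- The permutation representation of the symmetric group `S_n` on `ℂⁿ`: a permutation `σ`
sends the basis vector `xᵢ` to `x_{σ i}`, i.e. it acts on coordinate functions by
`(σ · v) i = v (σ⁻¹ i)`. -/
noncomputable def permRep (n : ℕ) : Representation ℂ (Equiv.Perm (Fin n)) (Fin n → ℂ) where
  toFun σ := LinearMap.funLeft ℂ ℂ ⇑σ⁻¹
  map_one' := by ext v i; simp [LinearMap.funLeft]
  map_mul' σ τ := by ext v i; simp [LinearMap.funLeft]

lemma univ_perm3 : (Finset.univ : Finset (Equiv.Perm (Fin 3))) =
  {1, Equiv.swap 0 1, Equiv.swap 1 2, Equiv.swap 0 2, Equiv.swap 0 1 * Equiv.swap 1 2,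
    Equiv.swap 0 2 * Equiv.swap 2 1} := by decide

lemma sum_perm3 {M : Type*} [AddCommMonoid M] (f : Equiv.Perm (Fin 3) → M) :
    ∑ σ, f σ = f 1 + f (Equiv.swap 0 1) + f (Equiv.swap 1 2) + f (Equiv.swap 0 2)
      + f (Equiv.swap 0 1 * Equiv.swap 1 2) + f (Equiv.swap 0 2 * Equiv.swap 2 1) := by
  rw [univ_perm3]
  repeat rw [Finset.sum_insert (by decide)]
  rw [Finset.sum_singleton]
  simp only [add_assoc]

lemma exists_coeff (x : MonoidAlgebra ℂ (Equiv.Perm (Fin 3))) :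
    ∃ c : Equiv.Perm (Fin 3) → ℂ, x = ∑ σ, c σ • MonoidAlgebra.single σ (1:ℂ) := by
  induction x using MonoidAlgebra.induction_linear with
  | zero => exact ⟨0, by simp⟩
  | add f g hf hg =>
    obtain ⟨c, hc⟩ := hf
    obtain ⟨d, hd⟩ := hg
    exact ⟨c + d, by simp only [Pi.add_apply, add_smul, Finset.sum_add_distrib, ← hc, ← hd]⟩
  | single σ a => exact ⟨Pi.single σ a, by simp [Pi.single_apply]⟩

lemma wedge_eq (m : ℕ) (v : Fin m → Fin 3 → ℂ) :
    wedge ℂ (Fin 3 → ℂ) m v = exteriorPower.ιMulti ℂ m v := rfl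

lemma wedge3 (v : Fin 3 → Fin 3 → ℂ) :
    wedge ℂ (Fin 3 → ℂ) 3 v = Matrix.det (Matrix.of v) •
      wedge ℂ (Fin 3 → ℂ) 3 (Pi.basisFun ℂ (Fin 3)) := by
  have h : exteriorPower.ιMulti ℂ 3 (M := Fin 3 → ℂ) =
      (LinearMap.toSpanSingleton ℂ _
        (wedge ℂ (Fin 3 → ℂ) 3 (Pi.basisFun ℂ (Fin 3)))).compAlternatingMap
        (Pi.basisFun ℂ (Fin 3)).det := by
    refine Module.Basis.ext_alternating (Pi.basisFun ℂ (Fin 3)) fun i h => ?_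
    let σ : Equiv.Perm (Fin 3) := Equiv.ofBijective i (Finite.injective_iff_bijective.1 h)
    change exteriorPower.ιMulti ℂ 3 ((Pi.basisFun ℂ (Fin 3)) ∘ σ) =
      (LinearMap.toSpanSingleton ℂ _ _).compAlternatingMap _ ((Pi.basisFun ℂ (Fin 3)) ∘ σ)
    rw [AlternatingMap.map_perm, AlternatingMap.map_perm]
    congr 1
    rw [LinearMap.compAlternatingMap_apply, Module.Basis.det_self,
      LinearMap.toSpanSingleton_apply, one_smul, wedge_eq]
  have h2 := congrArg (fun f => f v) h
  simp only [LinearMap.compAlternatingMap_apply, LinearMap.toSpanSingleton_apply,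
    Pi.basisFun_det_apply] at h2
  exact h2

lemma wedge3_ne : wedge ℂ (Fin 3 → ℂ) 3 (Pi.basisFun ℂ (Fin 3)) ≠ 0 := by
  intro h
  have := congrArg (exteriorPower.alternatingMapLinearEquiv (Pi.basisFun ℂ (Fin 3)).det) h
  rw [wedge_eq, exteriorPower.alternatingMapLinearEquiv_apply_ιMulti,
    Module.Basis.det_self] at this
  simp at this

lemma wedge0_ne (v : Fin 0 → Fin 3 → ℂ) : wedge ℂ (Fin 3 → ℂ) 0 v ≠ 0 := by
  intro h
  have := congrArg (exteriorPower.zeroEquiv ℂ (Fin 3 → ℂ)) h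
  rw [wedge_eq, exteriorPower.zeroEquiv_ιMulti] at this
  simp at this

lemma wedge2 : ∃ a b c : ⋀[ℂ]^2 (Fin 3 → ℂ), ∀ v : Fin 2 → Fin 3 → ℂ,
    wedge ℂ (Fin 3 → ℂ) 2 v = (v 0 0 * v 1 1 - v 0 1 * v 1 0) • a
      + (v 0 0 * v 1 2 - v 0 2 * v 1 0) • b + (v 0 1 * v 1 2 - v 0 2 * v 1 1) • c := by
  let e : Fin 3 → Fin 3 → ℂ := fun i => Pi.single i 1
  refine ⟨wedge ℂ _ 2 ![e 0, e 1], wedge ℂ _ 2 ![e 0, e 2], wedge ℂ _ 2 ![e 1, e 2], fun v => ?_⟩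
  apply Subtype.ext
  have hv : ∀ w : Fin 3 → ℂ, w = w 0 • e 0 + w 1 • e 1 + w 2 • e 2 := by
    intro w; ext i; fin_cases i <;> simp [e]
  have hi : ∀ w : Fin 3 → ℂ, ExteriorAlgebra.ι ℂ w = w 0 • ExteriorAlgebra.ι ℂ (e 0)
      + w 1 • ExteriorAlgebra.ι ℂ (e 1) + w 2 • ExteriorAlgebra.ι ℂ (e 2) := by
    intro w
    conv_lhs => rw [hv w]
    simp
  have hs : ∀ i j, ExteriorAlgebra.ι ℂ (e i) * ExteriorAlgebra.ι ℂ (e j)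
      = - (ExteriorAlgebra.ι ℂ (e j) * ExteriorAlgebra.ι ℂ (e i)) := fun i j =>
    eq_neg_of_add_eq_zero_left (ExteriorAlgebra.ι_add_mul_swap _ _)
  simp only [wedge, ExteriorAlgebra.ιMulti_apply, Submodule.coe_add, Submodule.coe_smul]
  simp only [List.ofFn_succ, List.ofFn_zero, List.prod_cons, List.prod_nil, mul_one]
  simp only [Matrix.cons_val, Fin.succ_zero_eq_one]
  rw [hi (v 0), hi (v 1)]
  simp only [add_mul, mul_add, smul_mul_smul_comm, ExteriorAlgebra.ι_sq_zero]
  rw [hs 1 0, hs 2 0, hs 2 1]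
  module

lemma key (A B : (m : ℕ) → Equiv.Perm (Fin 3) → Module.End ℂ (⋀[ℂ]^m (Fin 3 → ℂ)))
    (hA : ∀ (m : ℕ) (σ : Equiv.Perm (Fin 3)) (v : Fin m → (Fin 3 → ℂ)),
      A m σ (wedge ℂ (Fin 3 → ℂ) m v) = wedge ℂ (Fin 3 → ℂ) m fun p => permRep 3 σ (v p))
    (hB : ∀ (m : ℕ) (σ : Equiv.Perm (Fin 3)) (v : Fin m → (Fin 3 → ℂ)),
      B m σ (wedge ℂ (Fin 3 → ℂ) m v) =
        ∑ p : Fin m, wedge ℂ (Fin 3 → ℂ) m (Function.update v p (permRep 3 σ (v p))))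
    (Ahat Bhat : (m : ℕ) →
      MonoidAlgebra ℂ (Equiv.Perm (Fin 3)) →ₗ[ℂ] Module.End ℂ (⋀[ℂ]^m (Fin 3 → ℂ)))
    (hAhat : ∀ (m : ℕ) (σ : Equiv.Perm (Fin 3)), Ahat m (MonoidAlgebra.single σ 1) = A m σ)
    (hBhat : ∀ (m : ℕ) (σ : Equiv.Perm (Fin 3)), Bhat m (MonoidAlgebra.single σ 1) = B m σ)
    (c : Equiv.Perm (Fin 3) → ℂ) (m : ℕ) :
    Ahat m (∑ σ, c σ • MonoidAlgebra.single σ (1:ℂ)) =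
      Bhat m (∑ σ, c σ • MonoidAlgebra.single σ (1:ℂ)) ↔
    ∀ v, ∑ σ, c σ • wedge ℂ (Fin 3 → ℂ) m (fun p => permRep 3 σ (v p)) =
      ∑ σ, c σ • ∑ p : Fin m,
        wedge ℂ (Fin 3 → ℂ) m (Function.update v p (permRep 3 σ (v p))) := by
  simp only [map_sum, map_smul, hAhat, hBhat, ← hA, ← hB]
  constructor
  · intro h v
    have := congrArg (fun f => f (wedge ℂ (Fin 3 → ℂ) m v)) h
    simpa using this
  · intro h
    apply exteriorPower.linearMap_ext
    ext1 v
    simpa [← wedge_eq] using h v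

lemma perm_s (σ : Equiv.Perm (Fin 3)) (w : Fin 3 → ℂ) (i : Fin 3) :
  permRep 3 σ w i = w (σ⁻¹ i) := rfl

lemma pv : (((1 : Equiv.Perm (Fin 3))⁻¹ 0 = 0 ∧ (1 : Equiv.Perm (Fin 3))⁻¹ 1 = 1 ∧
    (1 : Equiv.Perm (Fin 3))⁻¹ 2 = 2) ∧
    ((Equiv.swap 0 1 : Equiv.Perm (Fin 3))⁻¹ 0 = 1 ∧ (Equiv.swap 0 1 : Equiv.Perm (Fin 3))⁻¹ 1 = 0 ∧
    (Equiv.swap 0 1 : Equiv.Perm (Fin 3))⁻¹ 2 = 2)) ∧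
    ((Equiv.swap 1 2 : Equiv.Perm (Fin 3))⁻¹ 0 = 0 ∧ (Equiv.swap 1 2 : Equiv.Perm (Fin 3))⁻¹ 1 = 2 ∧
    (Equiv.swap 1 2 : Equiv.Perm (Fin 3))⁻¹ 2 = 1) ∧
    ((Equiv.swap 0 2 : Equiv.Perm (Fin 3))⁻¹ 0 = 2 ∧ (Equiv.swap 0 2 : Equiv.Perm (Fin 3))⁻¹ 1 = 1 ∧
    (Equiv.swap 0 2 : Equiv.Perm (Fin 3))⁻¹ 2 = 0) ∧
    ((Equiv.swap 0 1 * Equiv.swap 1 2 : Equiv.Perm (Fin 3))⁻¹ 0 = 2 ∧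
    (Equiv.swap 0 1 * Equiv.swap 1 2 : Equiv.Perm (Fin 3))⁻¹ 1 = 0 ∧
    (Equiv.swap 0 1 * Equiv.swap 1 2 : Equiv.Perm (Fin 3))⁻¹ 2 = 1) ∧
    ((Equiv.swap 0 2 * Equiv.swap 2 1 : Equiv.Perm (Fin 3))⁻¹ 0 = 1 ∧
    (Equiv.swap 0 2 * Equiv.swap 2 1 : Equiv.Perm (Fin 3))⁻¹ 1 = 2 ∧
    (Equiv.swap 0 2 * Equiv.swap 2 1 : Equiv.Perm (Fin 3))⁻¹ 2 = 0) := by decide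

lemma lie_iff (c : Equiv.Perm (Fin 3) → ℂ) :
    (∀ m ≤ 3, ∀ v, ∑ σ, c σ • wedge ℂ (Fin 3 → ℂ) m (fun p => permRep 3 σ (v p)) =
      ∑ σ, c σ • ∑ p : Fin m,
        wedge ℂ (Fin 3 → ℂ) m (Function.update v p (permRep 3 σ (v p)))) ↔
    (c 1 = - (c (Equiv.swap 0 1) + c (Equiv.swap 1 2) + c (Equiv.swap 0 2)) ∧
      c (Equiv.swap 0 2 * Equiv.swap 2 1) = - c (Equiv.swap 0 1 * Equiv.swap 1 2)) := by
  obtain ⟨⟨⟨a1, a2, a3⟩, ⟨b1, b2, b3⟩⟩, ⟨c1, c2, c3⟩, ⟨d1, d2, d3⟩, ⟨e1, e2, e3⟩,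
    ⟨f1, f2, f3⟩⟩ := pv
  constructor
  · intro h
    have h0 := h 0 (by norm_num) 0
    have h3 := h 3 le_rfl (Pi.basisFun ℂ (Fin 3))
    have e0 : ∀ w : Fin 0 → Fin 3 → ℂ, w = 0 := fun w => Subsingleton.elim _ _
    simp only [Finset.univ_eq_empty, Finset.sum_empty, smul_zero, Finset.sum_const_zero] at h0
    simp only [e0 (fun _ => _), ← Finset.sum_smul] at h0
    have h0' := (smul_eq_zero.1 h0).resolve_right (wedge0_ne _)
    rw [sum_perm3] at h0'
    simp only [fun σ p => wedge3 (Function.update (Pi.basisFun ℂ (Fin 3)) p (permRep 3 σ ((Pi.basisFun ℂ (Fin 3)) p))), fun σ : Equiv.Perm (Fin 3) => wedge3 (fun p => permRep 3 σ ((Pi.basisFun ℂ (Fin 3)) p)), smul_smul, ← Finset.sum_smul] at h3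
    have h3' := smul_left_injective ℂ wedge3_ne h3
    rw [sum_perm3, sum_perm3] at h3'
    simp only [Matrix.det_fin_three, Matrix.of_apply, Fin.sum_univ_three, Function.update_apply, ite_apply,
      perm_s, a1, a2, a3, b1, b2, b3, c1, c2, c3, d1, d2, d3, e1, e2, e3, f1, f2, f3] at h3'
    simp [Pi.single_apply] at h3'
    constructor
    · linear_combination (1/3) * h0' - (1/3) * h3'
    · linear_combination (2/3) * h0' + (1/3) * h3'
  · rintro ⟨h1, h2⟩ m hm v
    rw [sum_perm3, sum_perm3, h1, h2]
    interval_cases m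
    · have e0 : ∀ w : Fin 0 → Fin 3 → ℂ, w = 0 := fun w => Subsingleton.elim _ _
      simp only [Finset.univ_eq_empty, Finset.sum_empty]
      simp only [e0 (fun _ => _)]
      module
    · have e1 : ∀ σ, (Function.update v 0 (permRep 3 σ (v 0))) = fun p => permRep 3 σ (v p) := by
        intro σ; ext p; fin_cases p; simp
      simp only [Fin.sum_univ_one, e1]
    · obtain ⟨a, b, c, hw⟩ := wedge2
      simp only [hw, Fin.sum_univ_two, Function.update_apply, ite_apply,
        perm_s, a1, a2, a3, b1, b2, b3, c1, c2, c3, d1, d2, d3, e1, e2, e3, f1, f2, f3]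
      simp only [if_true, zero_ne_one, one_ne_zero, if_false]
      module
    · simp only [fun σ p => wedge3 (Function.update v p (permRep 3 σ (v p))), fun σ : Equiv.Perm (Fin 3) => wedge3 (fun p => permRep 3 σ (v p)), smul_smul, ← Finset.sum_smul, ← add_smul]
      congr 1
      simp only [Matrix.det_fin_three, Matrix.of_apply, Fin.sum_univ_three, Function.update_apply, ite_apply,
        perm_s, a1, a2, a3, b1, b2, b3, c1, c2, c3, d1, d2, d3, e1, e2, e3, f1, f2, f3]
      simp only [Fin.reduceEq, if_true, if_false]
      ring

/-- The space `L_3` of Lie elements of `ℂ[S_3]` with respect to the permutation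
representation `ℂ³` has dimension `4`; the elements `1 - (12)`, `1 - (23)`, `1 - (13)` and
`(123) - (132)` form a basis (they are linearly independent and span `L_3`).
Here `(123) = Equiv.swap 0 1 * Equiv.swap 1 2` and `(132) = Equiv.swap 0 2 * Equiv.swap 2 1`
(indices shifted to be 0-based). -/
theorem statement13
    (A B : (m : ℕ) → Equiv.Perm (Fin 3) → Module.End ℂ (⋀[ℂ]^m (Fin 3 → ℂ)))
    (hA : ∀ (m : ℕ) (σ : Equiv.Perm (Fin 3)) (v : Fin m → (Fin 3 → ℂ)),
      A m σ (wedge ℂ (Fin 3 → ℂ) m v) = wedge ℂ (Fin 3 → ℂ) m fun p => permRep 3 σ (v p))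
    (hB : ∀ (m : ℕ) (σ : Equiv.Perm (Fin 3)) (v : Fin m → (Fin 3 → ℂ)),
      B m σ (wedge ℂ (Fin 3 → ℂ) m v) =
        ∑ p : Fin m, wedge ℂ (Fin 3 → ℂ) m (Function.update v p (permRep 3 σ (v p))))
    (Ahat Bhat : (m : ℕ) →
      MonoidAlgebra ℂ (Equiv.Perm (Fin 3)) →ₗ[ℂ] Module.End ℂ (⋀[ℂ]^m (Fin 3 → ℂ)))
    (hAhat : ∀ (m : ℕ) (σ : Equiv.Perm (Fin 3)), Ahat m (MonoidAlgebra.single σ 1) = A m σ)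
    (hBhat : ∀ (m : ℕ) (σ : Equiv.Perm (Fin 3)), Bhat m (MonoidAlgebra.single σ 1) = B m σ) :
    let L : Set (MonoidAlgebra ℂ (Equiv.Perm (Fin 3))) := {x | ∀ m ≤ 3, Ahat m x = Bhat m x}
    let v : Fin 4 → MonoidAlgebra ℂ (Equiv.Perm (Fin 3)) :=
      ![1 - MonoidAlgebra.single (Equiv.swap 0 1) 1,
        1 - MonoidAlgebra.single (Equiv.swap 1 2) 1,
        1 - MonoidAlgebra.single (Equiv.swap 0 2) 1,
        MonoidAlgebra.single (Equiv.swap 0 1 * Equiv.swap 1 2) 1 -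
          MonoidAlgebra.single (Equiv.swap 0 2 * Equiv.swap 2 1) 1]
    LinearIndependent ℂ v ∧ L = ↑(Submodule.span ℂ (Set.range v)) := by
  intro L v
  constructor
  · rw [Fintype.linearIndependent_iff]
    intro g hg
    have hc : ∀ σ : Equiv.Perm (Fin 3), (∑ i, g i • v i).coeff σ = 0 := by
      intro σ; rw [hg]; rfl
    simp only [Fin.sum_univ_four, v, MonoidAlgebra.one_def] at hc
    have k1 := hc (Equiv.swap 0 1)
    have k2 := hc (Equiv.swap 1 2)
    have k3 := hc (Equiv.swap 0 2)
    have k4 := hc (Equiv.swap 0 1 * Equiv.swap 1 2)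
    simp [MonoidAlgebra.coeff_single, Finsupp.single_apply] at k1 k2 k3 k4
    simp +decide at k1 k2 k3 k4
    intro i
    fin_cases i <;> simp [*]
  · ext x
    obtain ⟨c, rfl⟩ := exists_coeff x
    have hL : (∑ σ, c σ • MonoidAlgebra.single σ (1:ℂ)) ∈ L ↔ _ :=
      (forall₂_congr fun m _ => key A B hA hB Ahat Bhat hAhat hBhat c m).trans (lie_iff c)
    rw [hL, SetLike.mem_coe, Submodule.mem_span_range_iff_exists_fun]
    simp only [Fin.sum_univ_four, v]
    simp only [Matrix.cons_val, MonoidAlgebra.one_def, sum_perm3]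
    constructor
    · rintro ⟨h1, h2⟩
      refine ⟨![-c (Equiv.swap 0 1), -c (Equiv.swap 1 2), -c (Equiv.swap 0 2),
        c (Equiv.swap 0 1 * Equiv.swap 1 2)], ?_⟩
      rw [h1, h2]
      simp only [Matrix.cons_val]
      module
    · rintro ⟨g, hg⟩
      have hc : ∀ σ : Equiv.Perm (Fin 3), _ := fun σ => congrArg (fun y => y.coeff σ) hg
      have k0 := hc 1
      have k1 := hc (Equiv.swap 0 1)
      have k2 := hc (Equiv.swap 1 2)
      have k3 := hc (Equiv.swap 0 2)
      have k4 := hc (Equiv.swap 0 1 * Equiv.swap 1 2)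
      have k5 := hc (Equiv.swap 0 2 * Equiv.swap 2 1)
      simp [MonoidAlgebra.coeff_single, Finsupp.single_apply] at k0 k1 k2 k3 k4 k5
      simp +decide at k0 k1 k2 k3 k4 k5
      constructor <;> grind
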